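/- Let Y > 0, μ > 0, let H : ℝ → ℝ be measurable, Y-periodic, essentially bounded and nonnegative, and suppose c > 0 and v ∈ W^{2,∞}(ℝ) is Y-periodic with −c + H(y)·√(1 + v'(y)²) = μ·v''(y)/(1 + v'(y)²) for almost every y ∈ ℝ. Then c = (1/Y)·∫₀^Y H(y)·√(1 + v'(y)²) dy. -/

import Mathlib

/-!
The right-hand side of the equation is an exact derivative: with `f = arctan ∘ v'`, the chain rule
gives `f' = v'' / (1 + v'²)` at every point where `v'` is differentiable, hence almost everywhere
by Rademacher's theorem. Since `arctan` is 1-Lipschitz, `f` is Lipschitz, hence absolutely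
continuous, so the fundamental theorem of calculus gives `∫₀^Y f' = f Y - f 0`, which vanishes
because `v'` inherits the periodicity of `v`. Integrating `H √(1 + v'²) = c + μ f'` over one
period leaves `∫₀^Y H √(1 + v'²) = c Y`.
-/

open MeasureTheory Real Filter

theorem lipschitzWith_arctan_one : LipschitzWith 1 Real.arctan := by
  refine lipschitzWith_of_nnnorm_deriv_le Real.differentiable_arctan fun x => ?_
  rw [← NNReal.coe_le_coe, coe_nnnorm, Real.deriv_arctan, Real.norm_eq_abs,
    abs_of_nonneg (by positivity), NNReal.coe_one]
  exact div_le_one_of_le₀ (by nlinarith [sq_nonneg x]) (by positivity)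

theorem periodic_deriv_of_periodic {v : ℝ → ℝ} {Y : ℝ} (h : Function.Periodic v Y) :
    Function.Periodic (deriv v) Y := fun x => by
  rw [← deriv_comp_add_const, funext h]

/-- The speed of the front is the mean value of `H(y)·√(1 + v'(y)²)` over one period. -/
theorem front_speed_formula (Y μ c : ℝ) (H v : ℝ → ℝ)
    (hY : 0 < Y) (hμ : 0 < μ)
    (hmeas : Measurable H) (hper : Function.Periodic H Y)
    (hbdd : ∃ M : ℝ, ∀ᵐ y : ℝ, |H y| ≤ M)
    (hnonneg : ∀ᵐ y : ℝ, 0 ≤ H y)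
    (hc : 0 < c)
    (hv : ∀ y, DifferentiableAt ℝ v y) (hlip : ∃ K, LipschitzWith K (deriv v))
    (hvper : Function.Periodic v Y)
    (heq : ∀ᵐ y : ℝ, -c + H y * Real.sqrt (1 + deriv v y ^ 2) =
        μ * deriv (deriv v) y / (1 + deriv v y ^ 2)) :
    c = (1 / Y) * ∫ y in (0:ℝ)..Y, H y * Real.sqrt (1 + deriv v y ^ 2) := by
  obtain ⟨K, hK⟩ := hlip
  have hac : AbsolutelyContinuousOnInterval (fun y => Real.arctan (deriv v y)) 0 Y :=
    (lipschitzWith_arctan_one.comp hK).lipschitzOnWith.absolutelyContinuousOnInterval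
  have hzero : ∫ y in (0:ℝ)..Y, deriv (fun y => Real.arctan (deriv v y)) y = 0 := by
    have hend : deriv v Y = deriv v 0 := by
      simpa using periodic_deriv_of_periodic hvper 0
    rw [hac.integral_deriv_eq_sub, hend, sub_self]
  have hae : ∀ᵐ y : ℝ, H y * Real.sqrt (1 + deriv v y ^ 2) =
      c + μ * deriv (fun y => Real.arctan (deriv v y)) y := by
    filter_upwards [heq, hK.ae_differentiableAt_real] with y hy hd
    rw [hd.hasDerivAt.arctan.deriv, one_div_mul_eq_div, ← mul_div_assoc, ← hy]
    ring
  have hint : ∫ y in (0:ℝ)..Y, H y * Real.sqrt (1 + deriv v y ^ 2) = Y * c := by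
    rw [intervalIntegral.integral_congr_ae (hae.mono fun y hy _ => hy),
      intervalIntegral.integral_add intervalIntegrable_const
        (hac.intervalIntegrable_deriv.const_mul μ),
      intervalIntegral.integral_const_mul, hzero]
    simp
  rw [hint]
  field_simp
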